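/- For every ε > 0 there exists a constant C(ε) > 0 with the following property: for every odd prime p, every integer n ≥ 1 with q := pⁿ, all integers β₁, β₂, β₃ coprime to p, and every real M with 1 ≤ M ≤ q^{1/2−ε}, one has Σ_{β₁,β₂,β₃}(M,q) ≤ C(ε) · (M^{5/2}q^{−1/2} + M^{9/5}q^{−1/5} + M) · q^ε. -/

import Mathlib

/-- `Σ_{β₁,β₂,β₃}(M,q)`: the number of triples `(x₁,x₂,x₃) ∈ ℤ³` with
`|x₁|,|x₂|,|x₃| ≤ M`, `p ∤ x₁x₂x₃` and `β₁x₁² + β₂x₂² + β₃x₃² ≡ 0 (mod q)`. -/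
noncomputable def sigmaCount (p : ℕ) (β₁ β₂ β₃ : ℤ) (M : ℝ) (q : ℕ) : ℕ :=
  Nat.card {x : ℤ × ℤ × ℤ |
    ((|x.1| : ℤ) : ℝ) ≤ M ∧ ((|x.2.1| : ℤ) : ℝ) ≤ M ∧ ((|x.2.2| : ℤ) : ℝ) ≤ M ∧
    ¬ (p : ℤ) ∣ x.1 * x.2.1 * x.2.2 ∧
    (q : ℤ) ∣ β₁ * x.1 ^ 2 + β₂ * x.2.1 ^ 2 + β₃ * x.2.2 ^ 2}

open Finset in
/-- The divisor bound `τ(n) ≪_δ n^δ`. -/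
theorem exists_card_divisors_le (δ : ℝ) (hδ : 0 < δ) :
    ∃ C : ℝ, 1 ≤ C ∧ ∀ n : ℕ, n ≠ 0 → (#n.divisors : ℝ) ≤ C * (n : ℝ) ^ δ := by
  have hlog : 0 < δ * Real.log 2 := mul_pos hδ (Real.log_pos one_lt_two)
  set K : ℝ := max 1 (1 / (δ * Real.log 2)) with hK
  have hK1 : 1 ≤ K := le_max_left _ _
  have hK2 : 1 ≤ K * (δ * Real.log 2) :=
    (div_le_iff₀ hlog).1 (le_max_right _ _)
  set B : ℕ := ⌈(2 : ℝ) ^ (1 / δ)⌉₊ with hB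
  refine ⟨K ^ B, one_le_pow₀ hK1, fun n hn => ?_⟩
  have hlocal : ∀ p ∈ n.primeFactors, ((n.factorization p + 1 : ℕ) : ℝ) ≤
      (if p < B then K else 1) * ((p ^ n.factorization p : ℕ) : ℝ) ^ δ := by
    intro p hp
    have hp2 : (2 : ℝ) ≤ p := by exact_mod_cast (Nat.prime_of_mem_primeFactors hp).two_le
    set e := n.factorization p
    have hpow : ((p ^ e : ℕ) : ℝ) ^ δ = ((p : ℝ) ^ δ) ^ e := by
      push_cast
      rw [← Real.rpow_natCast_mul (by positivity), mul_comm, Real.rpow_mul_natCast (by positivity)]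
    rw [hpow]
    split_ifs with h
    · have h1 : ((2 : ℝ) ^ δ) ^ e ≤ ((p : ℝ) ^ δ) ^ e := by gcongr
      have h2 : 1 + e * (δ * Real.log 2) ≤ ((2 : ℝ) ^ δ) ^ e := by
        rw [Real.rpow_def_of_pos two_pos, ← Real.exp_nat_mul]
        have := Real.add_one_le_exp (e * (Real.log 2 * δ))
        linarith
      have h3 : (e : ℝ) ≤ e * (K * (δ * Real.log 2)) := le_mul_of_one_le_right (by positivity) hK2
      calc ((e + 1 : ℕ) : ℝ) = e + 1 := by push_cast; ring
        _ ≤ K * (1 + e * (δ * Real.log 2)) := by linarith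
        _ ≤ _ := by gcongr; exact h2.trans h1
    · have h1 : (2 : ℝ) ≤ (p : ℝ) ^ δ := by
        have h2 : (2 : ℝ) ^ (1 / δ) ≤ p := (Nat.le_ceil _).trans (by exact_mod_cast not_lt.1 h)
        calc (2 : ℝ) = ((2 : ℝ) ^ (1 / δ)) ^ δ := by
              rw [← Real.rpow_mul two_pos.le, one_div_mul_cancel hδ.ne', Real.rpow_one]
          _ ≤ _ := by gcongr
      rw [one_mul]
      calc ((e + 1 : ℕ) : ℝ) ≤ ((2 ^ e : ℕ) : ℝ) := by exact_mod_cast Nat.lt_two_pow_self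
        _ = 2 ^ e := by push_cast; rfl
        _ ≤ _ := by gcongr
  have hn' : (n : ℝ) ^ δ = ∏ p ∈ n.primeFactors, ((p ^ n.factorization p : ℕ) : ℝ) ^ δ := by
    rw [Real.finsetProd_rpow _ _ (fun _ _ => by positivity), ← Nat.cast_prod]
    congr 2
    exact (Nat.prod_factorization_pow_eq_self hn).symm
  rw [Nat.card_divisors hn, Nat.cast_prod, hn']
  refine (prod_le_prod (fun _ _ => by positivity) hlocal).trans ?_
  rw [prod_mul_distrib]
  gcongr
  rw [prod_ite, prod_const, prod_const_one, mul_one]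
  refine pow_le_pow_right₀ hK1 ?_
  calc #{p ∈ n.primeFactors | p < B} ≤ #(range B) := card_le_card (by intro p; simp)
    _ = B := card_range B

open Finset in
/-- A set of integers in `[-W, W]` whose points are `s`-separated has at most `2W/s + 1` points. -/
theorem card_le_of_separated {s W : ℤ} (hs : 0 < s) (hW0 : 0 ≤ W) (S : Finset ℤ)
    (hW : ∀ x ∈ S, |x| ≤ W) (hsep : ∀ x ∈ S, ∀ y ∈ S, x ≠ y → s ≤ |x - y|) :
    (#S : ℝ) ≤ 2 * W / s + 1 := by
  have hcard : #S ≤ #(Icc 0 (2 * W / s)) := by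
    refine card_le_card_of_injOn (fun x => (x + W) / s) ?_ ?_
    · intro x hx
      have := abs_le.1 (hW x hx)
      simp only [coe_Icc, Set.mem_Icc]
      exact ⟨Int.ediv_nonneg (by linarith) hs.le, Int.ediv_le_ediv hs (by linarith)⟩
    · intro x hx y hy hxy
      by_contra hne
      have h := hsep x hx y hy hne
      simp only at hxy
      have h1 := Int.emod_add_mul_ediv (x + W) s
      have h2 := Int.emod_add_mul_ediv (y + W) s
      rw [hxy] at h1
      have h3 : |x - y| < s := by
        rw [abs_lt]
        constructor <;>
          linarith [Int.emod_nonneg (x + W) hs.ne', Int.emod_lt_of_pos (x + W) hs,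
            Int.emod_nonneg (y + W) hs.ne', Int.emod_lt_of_pos (y + W) hs]
      linarith
  rw [Int.card_Icc] at hcard
  have h0 : 0 ≤ 2 * W / s := Int.ediv_nonneg (by linarith) hs.le
  have h1 : (#S : ℤ) ≤ 2 * W / s + 1 := by omega
  have hs' : (0 : ℝ) < s := by exact_mod_cast hs
  have h2 : ((2 * W / s : ℤ) : ℝ) ≤ 2 * W / s := by
    rw [le_div_iff₀ hs']
    exact_mod_cast Int.ediv_mul_le (2 * W) hs.ne'
  have h3 : (#S : ℝ) ≤ ((2 * W / s : ℤ) : ℝ) + 1 := by exact_mod_cast h1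
  linarith

open Finset in
theorem card_pell_class_le {D n : ℤ} (hD : D ≠ 0) (hn : n ≠ 0) {R : ℝ} (hR : 1 ≤ R) (hDR : D ≤ R)
    (T : Finset (ℤ × ℤ)) (hpos : ∀ a ∈ T, 0 < a.1 ∧ 0 < a.2)
    (hle : ∀ a ∈ T, (a.1 : ℝ) ≤ R ∧ (a.2 : ℝ) ≤ R) (hT : ∀ a ∈ T, a.1 ^ 2 - D * a.2 ^ 2 = n)
    (hclass : ∀ a ∈ T, ∀ b ∈ T, n ∣ 2 * (a.1 * b.2 - b.1 * a.2)) :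
    (#T : ℝ) ≤ 26 + Real.log (2 * R ^ 2) / Real.log (3 / 2) := by
  have hl : 0 < Real.log (3 / 2) := Real.log_pos (by norm_num)
  have hunit : ∀ a ∈ T, ∀ b ∈ T, ∃ U V : ℤ, U ^ 2 - D * V ^ 2 = 4 ∧
      2 * (a.1 * b.1 - D * a.2 * b.2) = n * U ∧ 2 * (a.1 * b.2 - b.1 * a.2) = n * V := by
    intro a ha b hb
    obtain ⟨V, hV⟩ := hclass a ha b hb
    have hsq : (2 * (a.1 * b.1 - D * a.2 * b.2)) ^ 2 = n ^ 2 * (4 + D * V ^ 2) := by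
      have : (2 * (a.1 * b.1 - D * a.2 * b.2)) ^ 2 =
        4 * (a.1 ^ 2 - D * a.2 ^ 2) * (b.1 ^ 2 - D * b.2 ^ 2) +
          D * (2 * (a.1 * b.2 - b.1 * a.2)) ^ 2 := by ring
      rw [this, hV, hT a ha, hT b hb]; ring
    obtain ⟨U, hU⟩ := (Int.pow_dvd_pow_iff two_ne_zero).1 (Dvd.intro _ hsq.symm)
    refine ⟨U, V, ?_, hU, hV⟩
    rw [hU, mul_pow] at hsq
    have := mul_left_cancel₀ (pow_ne_zero 2 hn) hsq
    linarith
  have hback : ∀ (a b : ℤ × ℤ) (U V : ℤ), a ∈ T →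
      2 * (a.1 * b.1 - D * a.2 * b.2) = n * U → 2 * (a.1 * b.2 - b.1 * a.2) = n * V →
      2 * b.1 = a.1 * U + D * a.2 * V ∧ 2 * b.2 = a.1 * V + a.2 * U := by
    intro a b U V ha hU hV
    have h := hT a ha
    constructor <;> refine mul_left_cancel₀ hn ?_
    · linear_combination a.1 * hU + D * a.2 * hV - 2 * b.1 * h
    · linear_combination a.1 * hV + a.2 * hU - 2 * b.2 * h
  have hlogR : 0 ≤ Real.log (2 * R ^ 2) := Real.log_nonneg (by nlinarith)
  rcases lt_or_gt_of_ne hD with hneg | hDpos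
  · rcases T.eq_empty_or_nonempty with rfl | ⟨a, ha⟩
    · simp only [card_empty, Nat.cast_zero]; positivity
    have hcard : #T ≤ #(Icc (-2 : ℤ) 2 ×ˢ Icc (-2 : ℤ) 2) := by
      choose! U V hUV hU hV using hunit a ha
      refine card_le_card_of_injOn (fun b => (U b, V b)) ?_ ?_
      · intro b hb
        have h := hUV b hb
        simp only [coe_product, coe_Icc, Set.mem_prod, Set.mem_Icc]
        refine ⟨⟨?_, ?_⟩, ?_, ?_⟩ <;> nlinarith [sq_nonneg (U b), sq_nonneg (V b)]
      · intro b hb c hc hbc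
        simp only [Prod.mk.injEq] at hbc
        have h1 := hback a b _ _ ha (hU b hb) (hV b hb)
        have h2 := hback a c _ _ ha (hU c hc) (hV c hc)
        rw [hbc.1, hbc.2] at h1
        ext <;> linarith [h1.1, h1.2, h2.1, h2.2]
    have h25 : #(Icc (-2 : ℤ) 2 ×ˢ Icc (-2 : ℤ) 2) = 25 := by decide
    rw [h25] at hcard
    have : (#T : ℝ) ≤ 25 := by exact_mod_cast hcard
    have : 0 ≤ Real.log (2 * R ^ 2) / Real.log (3 / 2) := by positivity
    linarith
  · have hD1 : (1 : ℝ) ≤ D := by exact_mod_cast hDpos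
    set r : ℝ := √(D : ℝ) with hr
    have hr2 : r ^ 2 = D := Real.sq_sqrt (by linarith)
    have hr1 : 1 ≤ r := Real.one_le_sqrt.2 hD1
    have hrR : r ≤ R := by nlinarith
    set α : ℤ × ℤ → ℝ := fun a => a.1 + a.2 * r with hα
    have hα1 : ∀ a ∈ T, 1 ≤ α a := by
      intro a ha
      have h1 : (1 : ℝ) ≤ a.1 := by exact_mod_cast (hpos a ha).1
      have h2 : (1 : ℝ) ≤ a.2 := by exact_mod_cast (hpos a ha).2
      simp only [hα]; nlinarith
    have hαR : ∀ a ∈ T, α a ≤ 2 * R ^ 2 := by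
      intro a ha
      have h1 : (1 : ℝ) ≤ a.2 := by exact_mod_cast (hpos a ha).2
      have h2 := hle a ha
      have h3 : a.2 * r ≤ R * R := mul_le_mul h2.2 hrR (by linarith) (by linarith)
      simp only [hα]; nlinarith
    have hkey : ∀ a ∈ T, ∀ b ∈ T, α a ≤ α b → α b < 3 / 2 * α a → a = b := by
      intro a ha b hb hab hba
      obtain ⟨U, V, hUV, hU, hV⟩ := hunit a ha b hb
      have hback' := hback a b U V ha hU hV
      have hα0 : 0 < α a := by linarith [hα1 a ha]
      have hb1 : (2 * b.1 : ℝ) = a.1 * U + D * a.2 * V := by exact_mod_cast hback'.1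
      have hb2 : (2 * b.2 : ℝ) = a.1 * V + a.2 * U := by exact_mod_cast hback'.2
      have hprod : 2 * α b = α a * (U + V * r) := by
        simp only [hα]; linear_combination hb1 + r * hb2 - a.2 * V * hr2
      have hUV' : ((U : ℝ) + V * r) * (U - V * r) = 4 := by
        have : (U : ℝ) ^ 2 - D * V ^ 2 = 4 := by exact_mod_cast hUV
        linear_combination this - V ^ 2 * hr2
      have hlow : 2 ≤ (U : ℝ) + V * r := by
        by_contra hlt
        nlinarith
      have hupp : (U : ℝ) + V * r < 3 := by
        by_contra hlt
        nlinarith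
      have hconj : 4 / 3 < (U : ℝ) - V * r := by
        by_contra hlt
        nlinarith
      have hconj' : (U : ℝ) - V * r ≤ 2 := by
        by_contra hlt
        nlinarith
      have hV0 : V = 0 := by
        have h1 : (V : ℝ) < 1 := by
          by_contra hlt
          nlinarith
        have h2 : (-1 : ℝ) < V := by
          by_contra hlt
          nlinarith
        have h1' : V < 1 := by exact_mod_cast h1
        have h2' : -1 < V := by exact_mod_cast h2
        omega
      have hU2 : U = 2 := by
        rw [hV0] at hupp hlow
        simp only [Int.cast_zero, zero_mul, add_zero] at hupp hlow
        have h1 : U < 3 := by exact_mod_cast hupp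
        have h2 : 2 ≤ U := by exact_mod_cast hlow
        omega
      rw [hV0, hU2] at hback'
      ext <;> linarith [hback'.1, hback'.2]
    set ℓ : ℤ × ℤ → ℝ := fun a => Real.log (α a) / Real.log (3 / 2) with hℓ
    have hℓ0 : ∀ a ∈ T, 0 ≤ ℓ a := fun a ha => div_nonneg (Real.log_nonneg (hα1 a ha)) hl.le
    have hclose : ∀ a ∈ T, ∀ b ∈ T, ⌊ℓ a⌋₊ = ⌊ℓ b⌋₊ → α b < 3 / 2 * α a := by
      intro a ha b hb hab
      have h1 := Nat.floor_le (hℓ0 a ha)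
      have h2 := Nat.lt_floor_add_one (ℓ b)
      rw [← hab] at h2
      have h3 : ℓ b < ℓ a + 1 := by linarith
      have h4 : Real.log (α b) < Real.log (α a) + Real.log (3 / 2) := by
        have : ℓ a + 1 = (Real.log (α a) + Real.log (3 / 2)) / Real.log (3 / 2) := by
          simp only [hℓ]; field_simp
        rw [this] at h3
        exact (div_lt_div_iff_of_pos_right hl).1 h3
      have ha0 : 0 < α a := by linarith [hα1 a ha]
      rw [← Real.log_mul ha0.ne' (by norm_num),
        Real.log_lt_log_iff (by linarith [hα1 b hb]) (by positivity)] at h4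
      linarith
    have hcard : #T ≤ #(range (⌊Real.log (2 * R ^ 2) / Real.log (3 / 2)⌋₊ + 1)) := by
      refine card_le_card_of_injOn (fun a => ⌊ℓ a⌋₊) ?_ ?_
      · intro a ha
        simp only [coe_range, Set.mem_Iio]
        refine Nat.lt_succ_of_le (Nat.floor_le_floor ?_)
        simp only [hℓ]
        gcongr
        · linarith [hα1 a ha]
        · exact hαR a ha
      · intro a ha b hb hab
        rcases le_total (α a) (α b) with h | h
        · exact hkey a ha b hb h (hclose a ha b hb hab)
        · exact (hkey b hb a ha h (hclose b hb a ha hab.symm)).symm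
    rw [card_range] at hcard
    have h1 : (#T : ℝ) ≤ (⌊Real.log (2 * R ^ 2) / Real.log (3 / 2)⌋₊ : ℝ) + 1 := by
      exact_mod_cast hcard
    have h2 := Nat.floor_le (div_nonneg hlogR hl.le)
    linarith

/-- If `h ^ 2 ∣ 4 * D` with `D` squarefree then `h ∣ 2`. -/
theorem Squarefree.dvd_two_of_sq_dvd_four_mul {D h : ℤ} (hD : Squarefree D)
    (hh : h ^ 2 ∣ 4 * D) : h ∣ 2 := by
  rcases Int.even_or_odd h with ⟨k, rfl⟩ | hodd
  · have hk : k * k ∣ D := by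
      refine (mul_dvd_mul_iff_left (by norm_num : (4 : ℤ) ≠ 0)).1 ?_
      rwa [show 4 * (k * k) = (k + k) ^ 2 by ring]
    obtain ⟨u, hu⟩ := (hD k hk).dvd (a := 1)
    exact ⟨u, by linear_combination 2 * hu⟩
  · have hcop : IsCoprime (h ^ 2) 4 := by
      have h2 : IsCoprime h 2 := by
        obtain ⟨k, rfl⟩ := hodd
        exact ⟨1, -k, by ring⟩
      have := h2.pow (m := 2) (n := 2)
      norm_num at this ⊢
      exact this
    have hk : h * h ∣ D := by rw [← sq]; exact hcop.dvd_of_dvd_mul_left hh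
    exact (hD h hk).dvd

open Finset in
theorem card_pell_primitive_le {D n : ℤ} (hD : Squarefree D) (hn : n ≠ 0) {R : ℝ} (hR : 1 ≤ R)
    (hDR : D ≤ R) (T : Finset (ℤ × ℤ)) (hpos : ∀ a ∈ T, 0 < a.1 ∧ 0 < a.2)
    (hle : ∀ a ∈ T, (a.1 : ℝ) ≤ R ∧ (a.2 : ℝ) ≤ R) (hT : ∀ a ∈ T, a.1 ^ 2 - D * a.2 ^ 2 = n)
    (hprim : ∀ a ∈ T, IsCoprime a.1 a.2) :
    #T ≤ ⌊26 + Real.log (2 * R ^ 2) / Real.log (3 / 2)⌋₊ * #n.natAbs.divisors := by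
  rcases T.eq_empty_or_nonempty with rfl | ⟨c, hc⟩
  · simp
  have hcopn : ∀ a ∈ T, IsCoprime a.2 n := by
    intro a ha
    rw [← hT a ha]
    have h : IsCoprime a.2 (a.1 ^ 2) := (hprim a ha).symm.pow_right
    rw [show a.1 ^ 2 - D * a.2 ^ 2 = a.1 ^ 2 + a.2 * (-(D * a.2)) by ring]
    exact h.add_mul_left_right _
  refine card_le_mul_card_image_of_maps_to
    (f := fun a => Int.gcd (a.1 * c.2 - c.1 * a.2) n) ?_ _ ?_
  · intro a _
    simp only [Nat.mem_divisors, ne_eq, Int.natAbs_eq_zero]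
    exact ⟨Int.natCast_dvd.1 (Int.gcd_dvd_right ..), hn⟩
  intro g hg
  have hsplit : ∀ a ∈ T, Int.gcd (a.1 * c.2 - c.1 * a.2) n = g → ∀ m : ℤ, n = g * m →
      m ∣ a.1 * c.2 + c.1 * a.2 := by
    intro a ha hag m hm
    have hg0 : 0 < Int.gcd (a.1 * c.2 - c.1 * a.2) n := Int.gcd_pos_of_ne_zero_right _ hn
    obtain ⟨k, hk⟩ : (g : ℤ) ∣ a.1 * c.2 - c.1 * a.2 := hag ▸ Int.gcd_dvd_left ..
    have hg' : (g : ℤ) ≠ 0 := by rw [← hag]; exact_mod_cast hg0.ne'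
    have hkm : IsCoprime m k := by
      rw [hk, hm, Int.gcd_mul_left] at hag
      rw [Int.isCoprime_iff_gcd_eq_one, Int.gcd_comm]
      have : 0 < g := by omega
      simp only [Int.natAbs_natCast] at hag
      exact Nat.eq_of_mul_eq_mul_left this (by omega)
    refine hkm.dvd_of_dvd_mul_left (y := k) ⟨c.2 ^ 2 - a.2 ^ 2, mul_left_cancel₀ hg' ?_⟩
    linear_combination (-(a.1 * c.2 + c.1 * a.2)) * hk + c.2 ^ 2 * hT a ha - a.2 ^ 2 * hT c hc
      + (c.2 ^ 2 - a.2 ^ 2) * hm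
  obtain ⟨m, hm⟩ : (g : ℤ) ∣ n := Int.natCast_dvd.2 (Nat.dvd_of_mem_divisors hg)
  refine Nat.le_floor (card_pell_class_le hD.ne_zero hn hR hDR _ ?_ ?_ ?_ ?_)
  · exact fun a ha => hpos a (mem_of_mem_filter a ha)
  · exact fun a ha => hle a (mem_of_mem_filter a ha)
  · exact fun a ha => hT a (mem_of_mem_filter a ha)
  intro a ha b hb
  rw [mem_filter] at ha hb
  have hga : (g : ℤ) ∣ a.1 * c.2 - c.1 * a.2 := ha.2 ▸ Int.gcd_dvd_left ..
  have hgb : (g : ℤ) ∣ b.1 * c.2 - c.1 * b.2 := hb.2 ▸ Int.gcd_dvd_left ..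
  have hma := hsplit a ha.1 ha.2 m hm
  have hmb := hsplit b hb.1 hb.2 m hm
  have hcop := hcopn c hc
  have hcg : IsCoprime (g : ℤ) c.2 := (hcop.of_isCoprime_of_dvd_right ⟨m, hm⟩).symm
  have hcm : IsCoprime m c.2 :=
    (hcop.of_isCoprime_of_dvd_right ⟨g, by rw [hm, mul_comm]⟩).symm
  have hg1 : (g : ℤ) ∣ a.1 * b.2 - b.1 * a.2 := by
    refine hcg.dvd_of_dvd_mul_left (y := c.2) ?_
    convert dvd_sub (hga.mul_left b.2) (hgb.mul_left a.2) using 1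
    ring
  have hm1 : m ∣ a.1 * b.2 - b.1 * a.2 := by
    refine hcm.dvd_of_dvd_mul_left (y := c.2) ?_
    convert dvd_sub (hma.mul_left b.2) (hmb.mul_left a.2) using 1
    ring
  have hgcd : (Int.gcd g m : ℤ) ∣ 2 := by
    have hg2 : (Int.gcd g m : ℤ) ∣ g := Int.gcd_dvd_left ..
    have hm2 : (Int.gcd g m : ℤ) ∣ m := Int.gcd_dvd_right ..
    set h : ℤ := (Int.gcd g m : ℤ)
    have hhn : h ^ 2 ∣ n := by rw [hm, sq]; exact mul_dvd_mul hg2 hm2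
    have hhc : IsCoprime h c.2 := hcg.of_isCoprime_of_dvd_left hg2
    have hha : IsCoprime (h ^ 2) (a.2 ^ 2) := by
      refine IsCoprime.pow ((hcopn a ha.1).of_isCoprime_of_dvd_right ?_).symm
      exact hg2.trans ⟨m, hm⟩
    have h2a : h ∣ 2 * a.1 := by
      refine hhc.dvd_of_dvd_mul_left (y := c.2) ?_
      convert dvd_add (hg2.trans hga) (hm2.trans hma) using 1
      ring
    refine hD.dvd_two_of_sq_dvd_four_mul (hha.dvd_of_dvd_mul_left (y := a.2 ^ 2) ?_)
    convert dvd_sub (pow_dvd_pow_of_dvd h2a 2) (hhn.mul_left 4) using 1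
    rw [← hT a ha.1]
    ring
  obtain ⟨t, ht⟩ := hgcd
  have hlcm : (Int.lcm g m : ℤ) ∣ a.1 * b.2 - b.1 * a.2 := Int.coe_lcm_dvd hg1 hm1
  have habs : (Int.gcd g m : ℤ) * Int.lcm g m = |n| := by
    rw [hm, Int.abs_eq_natAbs]
    have := Int.gcd_mul_lcm g m
    rw [← Int.natAbs_mul] at this
    exact_mod_cast this
  rw [← abs_dvd, ← habs]
  exact mul_dvd_mul ⟨t, ht⟩ hlcm

open Finset in
/-- The equation `X ^ 2 - D * Z ^ 2 = n` with `D` squarefree has few solutions in a box. -/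
theorem card_pell_le {D n : ℤ} (hD : Squarefree D) (hn : n ≠ 0) {R : ℝ} (hR : 1 ≤ R)
    (hDR : D ≤ R) (T : Finset (ℤ × ℤ)) (hpos : ∀ a ∈ T, 0 < a.1 ∧ 0 < a.2)
    (hle : ∀ a ∈ T, (a.1 : ℝ) ≤ R ∧ (a.2 : ℝ) ≤ R) (hT : ∀ a ∈ T, a.1 ^ 2 - D * a.2 ^ 2 = n) :
    #T ≤ ⌊26 + Real.log (2 * R ^ 2) / Real.log (3 / 2)⌋₊ * #n.natAbs.divisors *
      #n.natAbs.divisors := by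
  have hfac : ∀ a ∈ T, ∃ x y : ℤ, a.1 = Int.gcd a.1 a.2 * x ∧ a.2 = Int.gcd a.1 a.2 * y ∧
      0 < x ∧ 0 < y ∧ IsCoprime x y := by
    intro a ha
    have hg : 0 < Int.gcd a.1 a.2 := Int.gcd_pos_of_ne_zero_left _ (hpos a ha).1.ne'
    obtain ⟨x, hx⟩ : (Int.gcd a.1 a.2 : ℤ) ∣ a.1 := Int.gcd_dvd_left ..
    obtain ⟨y, hy⟩ : (Int.gcd a.1 a.2 : ℤ) ∣ a.2 := Int.gcd_dvd_right ..
    refine ⟨x, y, hx, hy, ?_, ?_, ?_⟩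
    · exact pos_of_mul_pos_right (hx ▸ (hpos a ha).1) (by positivity)
    · exact pos_of_mul_pos_right (hy ▸ (hpos a ha).2) (by positivity)
    · have h1 : Int.gcd (Int.gcd a.1 a.2 * x) (Int.gcd a.1 a.2 * y) = Int.gcd a.1 a.2 := by
        rw [← hx, ← hy]
      rw [Int.gcd_mul_left, Int.natAbs_natCast] at h1
      rw [Int.isCoprime_iff_gcd_eq_one]
      exact Nat.eq_of_mul_eq_mul_left hg (by omega)
  choose! x y hx hy hx0 hy0 hxy using hfac
  have hsq : ∀ a ∈ T, n = (Int.gcd a.1 a.2 : ℤ) ^ 2 * (x a ^ 2 - D * y a ^ 2) := by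
    intro a ha
    have h1 := hx a ha
    have h2 := hy a ha
    set g : ℤ := (Int.gcd a.1 a.2 : ℤ)
    rw [← hT a ha]
    linear_combination (a.1 + g * x a) * h1 - D * (a.2 + g * y a) * h2
  refine card_le_mul_card_image_of_maps_to (f := fun a => Int.gcd a.1 a.2) ?_ _ ?_
  · intro a ha
    simp only [Nat.mem_divisors, ne_eq, Int.natAbs_eq_zero]
    refine ⟨Int.natCast_dvd.1 ?_, hn⟩
    exact (dvd_pow_self _ two_ne_zero).trans ⟨_, hsq a ha⟩
  intro g hg
  rcases (T.filter fun a => Int.gcd a.1 a.2 = g).eq_empty_or_nonempty with h | ⟨c, hc⟩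
  · simp [h]
  rw [mem_filter] at hc
  have hnc := hsq c hc.1
  set k := x c ^ 2 - D * y c ^ 2
  have hk0 : k ≠ 0 := by rintro h; rw [h, mul_zero] at hnc; exact hn hnc
  have hg0 : (g : ℤ) ≠ 0 := by
    rintro h; rw [hc.2, h] at hnc; simp [hn] at hnc
  have hg1 : (1 : ℤ) ≤ g := by omega
  have hinj : Set.InjOn (fun a => (x a, y a)) (T.filter fun a => Int.gcd a.1 a.2 = g) := by
    intro a ha b hb hab
    rw [mem_coe, mem_filter] at ha hb
    simp only [Prod.mk.injEq] at hab
    ext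
    · rw [hx a ha.1, hx b hb.1, ha.2, hb.2, hab.1]
    · rw [hy a ha.1, hy b hb.1, ha.2, hb.2, hab.2]
  rw [← card_image_of_injOn hinj]
  refine (card_pell_primitive_le hD hk0 hR hDR _ ?_ ?_ ?_ ?_).trans ?_
  · simp only [forall_mem_image, mem_filter]
    exact fun a ha => ⟨hx0 a ha.1, hy0 a ha.1⟩
  · simp only [forall_mem_image, mem_filter]
    intro a ha
    have h1 := hx a ha.1
    have h2 := hy a ha.1
    rw [ha.2] at h1 h2
    have h3 : x a ≤ a.1 := by nlinarith [hx0 a ha.1]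
    have h4 : y a ≤ a.2 := by nlinarith [hy0 a ha.1]
    exact ⟨(Int.cast_le.2 h3).trans (hle a ha.1).1, (Int.cast_le.2 h4).trans (hle a ha.1).2⟩
  · simp only [forall_mem_image, mem_filter]
    intro a ha
    have h1 := hsq a ha.1
    rw [ha.2] at h1
    rw [hc.2, h1] at hnc
    exact mul_left_cancel₀ (pow_ne_zero 2 hg0) hnc
  · simp only [forall_mem_image, mem_filter]
    exact fun a ha => hxy a ha.1
  · refine Nat.mul_le_mul_left _ (card_le_card (Nat.divisors_subset_of_dvd (by simpa using hn) ?_))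
    exact Int.natAbs_dvd_natAbs.2 ⟨_, by rw [mul_comm]; exact hnc⟩

open Finset in
/-- Uniformly in the coefficients, `A * y ^ 2 - B * x ^ 2 = w ≠ 0` has `≪ q ^ δ` positive solutions
when all of `A ^ 2`, `B ^ 2`, `x ^ 2`, `y ^ 2` are at most `q`. -/
theorem exists_card_binary_le (δ : ℝ) (hδ : 0 < δ) :
    ∃ C : ℝ, 1 ≤ C ∧ ∀ q : ℕ, 2 ≤ q → ∀ A B w : ℤ, A ≠ 0 → B ≠ 0 → w ≠ 0 →
      A ^ 2 ≤ q → B ^ 2 ≤ q → ∀ T : Finset (ℤ × ℤ),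
      (∀ a ∈ T, 0 < a.1 ∧ 0 < a.2 ∧ a.1 ^ 2 ≤ q ∧ a.2 ^ 2 ≤ q ∧ A * a.2 ^ 2 - B * a.1 ^ 2 = w) →
      (#T : ℝ) ≤ C * (q : ℝ) ^ δ := by
  have hl : 0 < Real.log (3 / 2) := Real.log_pos (by norm_num)
  obtain ⟨C, hC1, hC⟩ := exists_card_divisors_le (δ / 9) (by positivity)
  set E : ℝ := 26 + 3 / (δ / 9) / Real.log (3 / 2) with hE
  have hE1 : 1 ≤ E := by
    have : 0 ≤ 3 / (δ / 9) / Real.log (3 / 2) := by positivity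
    linarith
  refine ⟨E * C * C, one_le_mul_of_one_le_of_one_le (one_le_mul_of_one_le_of_one_le hE1 hC1) hC1,
    fun q hq A B w hA hB hw hAq hBq T hT => ?_⟩
  have hq2 : (2 : ℝ) ≤ q := by exact_mod_cast hq
  have hq2' : (2 : ℤ) ≤ q := by exact_mod_cast hq
  rcases T.eq_empty_or_nonempty with rfl | ⟨c, hc⟩
  · simp only [card_empty, Nat.cast_zero]; positivity
  obtain ⟨D, d, hd, hDd, hDsq⟩ : ∃ D d : ℤ, 0 < d ∧ A * B = D * d ^ 2 ∧ Squarefree D := by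
    obtain ⟨a, b, hab, ha⟩ := Nat.sq_mul_squarefree (A * B).natAbs
    have hb : b ≠ 0 := by
      rintro rfl
      have : (A * B).natAbs ≠ 0 := by simp [hA, hB]
      simp at hab
      omega
    have hab' : ((b : ℤ) ^ 2 * a) = |A * B| := by
      rw [Int.abs_eq_natAbs, ← hab]; push_cast; ring
    rcases abs_choice (A * B) with h | h
    · exact ⟨a, b, by positivity, by rw [← h, ← hab']; ring, Int.squarefree_natCast.2 ha⟩
    · refine ⟨-a, b, by positivity, by rw [h] at hab'; linear_combination hab', ?_⟩
      rw [← Int.squarefree_natAbs]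
      simpa using ha
  have hABq : |A * B| ≤ q := by
    rw [abs_le]
    constructor <;> nlinarith [sq_nonneg (A - B), sq_nonneg (A + B)]
  have hD0 : D ≠ 0 := hDsq.ne_zero
  have hDd' : |A * B| = |D| * d ^ 2 := by rw [hDd, abs_mul, abs_of_nonneg (sq_nonneg d)]
  have hDpos : 1 ≤ |D| := Int.one_le_abs hD0
  have hd1 : 1 ≤ d ^ 2 := one_le_pow₀ hd
  have hDq : |D| ≤ q := by nlinarith
  have hdq : d ^ 2 ≤ q := by nlinarith
  set φ : ℤ × ℤ → ℤ × ℤ := fun a => (|A| * a.2, d * a.1) with hφ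
  have hAabs : 0 < |A| := abs_pos.2 hA
  have hinj : Set.InjOn φ T := by
    intro a _ b _ hab
    simp only [hφ, Prod.mk.injEq, mul_eq_mul_left_iff, hAabs.ne', hd.ne', or_false] at hab
    exact Prod.ext hab.2 hab.1
  have hφpos : ∀ a ∈ T, 0 < |A| * a.2 ∧ 0 < d * a.1 := fun a ha =>
    ⟨mul_pos hAabs (hT a ha).2.1, mul_pos hd (hT a ha).1⟩
  have hφle : ∀ a ∈ T, |A| * a.2 ≤ q ∧ d * a.1 ≤ q := by
    intro a ha
    obtain ⟨-, -, h1, h2, -⟩ := hT a ha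
    constructor
    · refine abs_le_of_sq_le_sq' ?_ (by positivity) |>.2
      rw [mul_pow, sq_abs, sq (q : ℤ)]
      exact mul_le_mul hAq h2 (by positivity) (by positivity)
    · refine abs_le_of_sq_le_sq' ?_ (by positivity) |>.2
      rw [mul_pow, sq (q : ℤ)]
      exact mul_le_mul hdq h1 (by positivity) (by positivity)
  have hφeq : ∀ a ∈ T, (|A| * a.2) ^ 2 - D * (d * a.1) ^ 2 = A * w := by
    intro a ha
    rw [mul_pow, sq_abs, ← (hT a ha).2.2.2.2]
    linear_combination a.1 ^ 2 * hDd
  have hn : A * w ≠ 0 := mul_ne_zero hA hw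
  have hnq : ((A * w).natAbs : ℝ) ≤ (q : ℝ) ^ 4 := by
    have h1 : |A * w| ≤ (q : ℤ) ^ 4 := by
      rw [← hφeq c hc]
      obtain ⟨h1, h2⟩ := hφle c hc
      obtain ⟨h3, h4⟩ := hφpos c hc
      have h5 : (|A| * c.2) ^ 2 ≤ (q : ℤ) ^ 2 := by gcongr
      have h6 : |D| * (d * c.1) ^ 2 ≤ (q : ℤ) * (q : ℤ) ^ 2 := by gcongr
      calc |(|A| * c.2) ^ 2 - D * (d * c.1) ^ 2|
          ≤ |(|A| * c.2) ^ 2| + |D * (d * c.1) ^ 2| := abs_sub _ _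
        _ = (|A| * c.2) ^ 2 + |D| * (d * c.1) ^ 2 := by
            rw [abs_mul, abs_of_nonneg (sq_nonneg (|A| * c.2)),
              abs_of_nonneg (sq_nonneg (d * c.1))]
        _ ≤ (q : ℤ) ^ 2 + (q : ℤ) * (q : ℤ) ^ 2 := add_le_add h5 h6
        _ ≤ (q : ℤ) ^ 4 := by
            nlinarith [sq_nonneg (q : ℤ), mul_nonneg (sq_nonneg (q : ℤ))
              (mul_nonneg (by linarith : (0 : ℤ) ≤ q - 2) (by linarith : (0 : ℤ) ≤ q + 1))]
    rw [Int.abs_eq_natAbs] at h1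
    exact_mod_cast h1
  have hpell := card_pell_le hDsq hn (R := q) (by linarith)
    (by exact_mod_cast (le_abs_self D).trans hDq) (T.image φ)
    (by simpa only [forall_mem_image] using hφpos)
    (by simp only [forall_mem_image]
        exact fun a ha => ⟨by exact_mod_cast (hφle a ha).1, by exact_mod_cast (hφle a ha).2⟩)
    (by simpa only [forall_mem_image] using hφeq)
  rw [card_image_of_injOn hinj] at hpell
  have hdiv : (#(A * w).natAbs.divisors : ℝ) ≤ C * ((q : ℝ) ^ (4 * (δ / 9))) := by
    refine (hC _ (by simpa using hn)).trans ?_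
    gcongr
    rw [Real.rpow_mul (by positivity)]
    gcongr
    exact_mod_cast hnq
  have hlog : (⌊26 + Real.log (2 * (q : ℝ) ^ 2) / Real.log (3 / 2)⌋₊ : ℝ) ≤
      E * (q : ℝ) ^ (δ / 9) := by
    have hq1 : 1 ≤ (q : ℝ) ^ (δ / 9) := Real.one_le_rpow (by linarith) (by positivity)
    have h1 : Real.log (2 * (q : ℝ) ^ 2) ≤ 3 * Real.log q := by
      rw [← Real.log_rpow (by positivity)]
      refine Real.log_le_log (by positivity) ?_
      norm_cast
      nlinarith [Nat.zero_le (q ^ 2)]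
    have h2 : Real.log q ≤ (q : ℝ) ^ (δ / 9) / (δ / 9) :=
      Real.log_le_rpow_div (by positivity) (by positivity)
    have h3 : 0 ≤ Real.log (2 * (q : ℝ) ^ 2) := Real.log_nonneg (by nlinarith)
    calc (⌊26 + Real.log (2 * (q : ℝ) ^ 2) / Real.log (3 / 2)⌋₊ : ℝ)
        ≤ 26 + Real.log (2 * (q : ℝ) ^ 2) / Real.log (3 / 2) := Nat.floor_le (by positivity)
      _ ≤ 26 * (q : ℝ) ^ (δ / 9) + 3 * ((q : ℝ) ^ (δ / 9) / (δ / 9)) / Real.log (3 / 2) := by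
          gcongr
          · linarith
          · linarith
      _ = E * (q : ℝ) ^ (δ / 9) := by rw [hE]; ring
  calc (#T : ℝ) ≤ (⌊26 + Real.log (2 * (q : ℝ) ^ 2) / Real.log (3 / 2)⌋₊ : ℝ) *
        #(A * w).natAbs.divisors * #(A * w).natAbs.divisors := by exact_mod_cast hpell
    _ ≤ (E * (q : ℝ) ^ (δ / 9)) * (C * ((q : ℝ) ^ (4 * (δ / 9)))) *
        (C * ((q : ℝ) ^ (4 * (δ / 9)))) := by gcongr
    _ = E * C * C * ((q : ℝ) ^ (δ / 9) * (q : ℝ) ^ (4 * (δ / 9)) * (q : ℝ) ^ (4 * (δ / 9))) := by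
        ring
    _ = E * C * C * (q : ℝ) ^ δ := by
        rw [← Real.rpow_add (by positivity), ← Real.rpow_add (by positivity)]
        congr 2
        ring

/-- A shortest nonzero vector `(a₀, b₀)`, of sup norm `ℓ ≤ √q`, of the lattice
`β₁ * a + β₂ * b ≡ 0 (mod q)`. -/
theorem exists_shortest_vector {q : ℕ} (hq : 2 ≤ q) {β₁ β₂ : ℤ} (h₁ : IsCoprime β₁ q) :
    ∃ a₀ b₀ ℓ : ℤ, 0 < ℓ ∧ ℓ ^ 2 ≤ q ∧ |a₀| ≤ ℓ ∧ |b₀| ≤ ℓ ∧ (|a₀| = ℓ ∨ |b₀| = ℓ) ∧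
      (q : ℤ) ∣ β₁ * a₀ + β₂ * b₀ ∧
      ∀ a b : ℤ, (a ≠ 0 ∨ b ≠ 0) → (q : ℤ) ∣ β₁ * a + β₂ * b → ℓ ≤ |a| ∨ ℓ ≤ |b| := by
  classical
  set P : ℕ → Prop := fun k => ∃ a b : ℤ, (a ≠ 0 ∨ b ≠ 0) ∧ (q : ℤ) ∣ β₁ * a + β₂ * b ∧
    max a.natAbs b.natAbs = k with hP
  obtain ⟨k, hkq, hk⟩ : ∃ k : ℕ, k ^ 2 ≤ q ∧ P k := by
    obtain ⟨u, v, huv⟩ := h₁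
    have hs : 0 < Nat.sqrt q := Nat.sqrt_pos.2 (by omega)
    obtain ⟨j, k, hk0, hks, hjk⟩ :=
      Real.exists_int_int_abs_mul_sub_le ((-(u * β₂) : ℤ) / (q : ℝ)) hs
    have hq0 : (0 : ℝ) < q := by positivity
    set a : ℤ := k * (-(u * β₂)) - j * q with ha
    have hsq : (q : ℝ) ≤ ((Nat.sqrt q : ℝ) + 1) ^ 2 := by
      have := (Nat.lt_succ_sqrt' q).le
      exact_mod_cast this
    have ha1 : (|a| : ℝ) ≤ q / ((Nat.sqrt q : ℝ) + 1) := by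
      have h2 : (a : ℝ) = q * (k * ((-(u * β₂) : ℤ) / (q : ℝ)) - j) := by
        rw [ha]; push_cast; field_simp
      rw [h2, abs_mul, abs_of_pos hq0, div_eq_mul_one_div (q : ℝ) (_ + 1)]
      exact mul_le_mul_of_nonneg_left hjk hq0.le
    have ha2 : (a : ℝ) ^ 2 ≤ q := by
      rw [← sq_abs]
      calc |(a : ℝ)| ^ 2 ≤ (q / ((Nat.sqrt q : ℝ) + 1)) ^ 2 := by gcongr
        _ = q * (q / ((Nat.sqrt q : ℝ) + 1) ^ 2) := by rw [div_pow]; ring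
        _ ≤ q * 1 := by gcongr; exact div_le_one_of_le₀ hsq (by positivity)
        _ = q := mul_one _
    have ha3 : a.natAbs ^ 2 ≤ q := by
      zify; rw [sq_abs]; exact_mod_cast ha2
    have hk3 : k.natAbs ^ 2 ≤ q := by
      have : k.natAbs ≤ Nat.sqrt q := by omega
      exact (Nat.pow_le_pow_left this 2).trans (Nat.sqrt_le' q)
    refine ⟨max a.natAbs k.natAbs, ?_, a, k, Or.inr hk0.ne', ?_, rfl⟩
    · rcases max_choice a.natAbs k.natAbs with h | h <;> rw [h] <;> assumption
    · exact ⟨k * β₂ * v - β₁ * j, by rw [ha]; linear_combination (-(k * β₂)) * huv⟩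
  have hex : ∃ k, P k := ⟨k, hk⟩
  obtain ⟨a₀, b₀, hne, hdvd, hmax⟩ := Nat.find_spec hex
  have hle : Nat.find hex ≤ k := Nat.find_min' hex hk
  set f := Nat.find hex with hf
  simp only [Int.abs_eq_natAbs]
  refine ⟨a₀, b₀, f, by omega, ?_, by omega, by omega, by omega, hdvd, ?_⟩
  · exact_mod_cast (Nat.pow_le_pow_left hle 2).trans hkq
  · intro a b hab hd
    have := Nat.find_min' hex ⟨a, b, hab, hd, rfl⟩
    rw [← hf] at this
    omega

open Finset in
theorem card_line_le {a₀ b₀ ℓ K : ℤ} (hℓ : 0 < ℓ) (hK : 0 ≤ K) (ha₀ : |a₀| = ℓ) (hb₀ : |b₀| ≤ ℓ)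
    (F : Finset (ℤ × ℤ)) (hF : ∀ P ∈ F, |P.1| ≤ K)
    (hline : ∀ P ∈ F, ∀ Q ∈ F, a₀ * (P.2 - Q.2) = b₀ * (P.1 - Q.1))
    (hsep : ∀ P ∈ F, ∀ Q ∈ F, P ≠ Q → ℓ ≤ |P.1 - Q.1| ∨ ℓ ≤ |P.2 - Q.2|) :
    (#F : ℝ) ≤ 2 * K / ℓ + 1 := by
  have hsep' : ∀ P ∈ F, ∀ Q ∈ F, P ≠ Q → ℓ ≤ |P.1 - Q.1| := by
    intro P hP Q hQ hne
    have h1 : ℓ * |P.2 - Q.2| ≤ ℓ * |P.1 - Q.1| := by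
      rw [← ha₀, ← abs_mul, hline P hP Q hQ, abs_mul, ha₀]
      gcongr
    have h2 := le_of_mul_le_mul_left h1 hℓ
    rcases hsep P hP Q hQ hne with h | h
    · exact h
    · exact h.trans h2
  have hinj : Set.InjOn Prod.fst (F : Set (ℤ × ℤ)) := by
    intro P hP Q hQ h
    by_contra hne
    have := hsep' P hP Q hQ hne
    rw [h, sub_self, abs_zero] at this
    omega
  rw [← card_image_of_injOn hinj]
  refine card_le_of_separated hℓ hK _ (by simpa only [forall_mem_image] using hF) ?_
  simp only [forall_mem_image]
  intro P hP Q hQ hne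
  exact hsep' P hP Q hQ fun h => hne (by rw [h])

/-- `β₁ a + β₂ b ≡ 0` for two vectors forces their determinant to vanish modulo `q`. -/
theorem dvd_det_of_dvd {q β₁ β₂ a b a₀ b₀ : ℤ} (h₁ : IsCoprime β₁ q)
    (h₀ : q ∣ β₁ * a₀ + β₂ * b₀) (h : q ∣ β₁ * a + β₂ * b) : q ∣ a₀ * b - b₀ * a := by
  refine h₁.symm.dvd_of_dvd_mul_left (y := β₁) ?_
  rw [show β₁ * (a₀ * b - b₀ * a) = b * (β₁ * a₀ + β₂ * b₀) - b₀ * (β₁ * a + β₂ * b) by ring]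
  exact dvd_sub (h₀.mul_left b) (h.mul_left b₀)

theorem eq_of_dvd_mul_sq_sub_sq {q β m x y : ℤ} (hβ : IsCoprime β q) (hm : m ^ 2 < q)
    (hx : 0 < x) (hxm : x ≤ m) (hy : 0 < y) (hym : y ≤ m) (h : q ∣ β * (x ^ 2 - y ^ 2)) :
    x = y := by
  have h1 : q ∣ x ^ 2 - y ^ 2 := hβ.symm.dvd_of_dvd_mul_left h
  have h2 : x ^ 2 - y ^ 2 = 0 := by
    refine Int.eq_zero_of_abs_lt_dvd h1 ?_
    rw [abs_lt]
    constructor <;> nlinarith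
  nlinarith

theorem abs_sq_sub_sq_le {m x y : ℤ} (hx : 0 < x ∧ x ≤ m) (hy : 0 < y ∧ y ≤ m) :
    |x ^ 2 - y ^ 2| ≤ m ^ 2 := by
  have h1 : x ^ 2 ≤ m ^ 2 := pow_le_pow_left₀ hx.1.le hx.2 2
  have h2 : y ^ 2 ≤ m ^ 2 := pow_le_pow_left₀ hy.1.le hy.2 2
  rw [abs_le]
  constructor <;> linarith [sq_nonneg x, sq_nonneg y]

theorem eq_of_fst_eq_of_snd_eq {q β₁ β₂ β₃ m : ℤ} (h₃ : IsCoprime β₃ q) (hm : m ^ 2 < q)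
    {x y : ℤ × ℤ × ℤ} (hx : 0 < x.2.2 ∧ x.2.2 ≤ m) (hy : 0 < y.2.2 ∧ y.2.2 ≤ m)
    (hxq : q ∣ β₁ * x.1 ^ 2 + β₂ * x.2.1 ^ 2 + β₃ * x.2.2 ^ 2)
    (hyq : q ∣ β₁ * y.1 ^ 2 + β₂ * y.2.1 ^ 2 + β₃ * y.2.2 ^ 2)
    (h1 : x.1 = y.1) (h2 : x.2.1 = y.2.1) : x = y := by
  refine Prod.ext h1 (Prod.ext h2 (eq_of_dvd_mul_sq_sub_sq h₃ hm hx.1 hx.2 hy.1 hy.2 ?_))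
  have := dvd_sub hxq hyq
  rw [h1, h2] at this
  obtain ⟨k, hk⟩ := this
  exact ⟨k, by linear_combination hk⟩

open Finset in
theorem card_image_det_le {q : ℕ} (hq : 0 < q) {a₀ b₀ ℓ K : ℤ} (hℓ : 0 ≤ ℓ) (hK : 0 ≤ K)
    (ha : |a₀| ≤ ℓ) (hb : |b₀| ≤ ℓ) (G : Finset (ℤ × ℤ)) (hG : ∀ P ∈ G, |P.1| ≤ K ∧ |P.2| ≤ K)
    (hdet : ∀ P ∈ G, ∀ Q ∈ G, (q : ℤ) ∣ a₀ * (P.2 - Q.2) - b₀ * (P.1 - Q.1)) :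
    (#(G.image fun P => a₀ * P.2 - b₀ * P.1) : ℝ) ≤ 4 * ℓ * K / q + 1 := by
  have h := card_le_of_separated (s := q) (W := 2 * ℓ * K) (by exact_mod_cast hq) (by positivity)
    (G.image fun P => a₀ * P.2 - b₀ * P.1) ?_ ?_
  · refine h.trans_eq ?_
    push_cast
    ring
  · simp only [forall_mem_image]
    intro P hP
    calc |a₀ * P.2 - b₀ * P.1| ≤ |a₀ * P.2| + |b₀ * P.1| := abs_sub _ _
      _ = |a₀| * |P.2| + |b₀| * |P.1| := by rw [abs_mul, abs_mul]
      _ ≤ ℓ * K + ℓ * K := by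
          gcongr
          · exact (hG P hP).2
          · exact (hG P hP).1
      _ = 2 * ℓ * K := by ring
  · simp only [forall_mem_image]
    intro P hP Q hQ hne
    refine Int.le_of_dvd (abs_pos.2 (sub_ne_zero.2 hne)) ((dvd_abs _ _).2 ?_)
    rw [show a₀ * P.2 - b₀ * P.1 - (a₀ * Q.2 - b₀ * Q.1) =
      a₀ * (P.2 - Q.2) - b₀ * (P.1 - Q.1) by ring]
    exact hdet P hP Q hQ

open Finset in
/-- The number of points of the lattice `β₁ * a + β₂ * b ≡ 0 (mod q)` in a box, in terms of the
length `ℓ` of a shortest vector. -/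
theorem card_lattice_le {q : ℕ} (hq : 0 < q) {β₁ β₂ a₀ b₀ ℓ K : ℤ} (h₁ : IsCoprime β₁ q)
    (hℓ : 0 < ℓ) (hK : 0 ≤ K) (ha : |a₀| ≤ ℓ) (hb : |b₀| ≤ ℓ) (hab : |a₀| = ℓ ∨ |b₀| = ℓ)
    (h₀ : (q : ℤ) ∣ β₁ * a₀ + β₂ * b₀)
    (hmin : ∀ a b : ℤ, (a ≠ 0 ∨ b ≠ 0) → (q : ℤ) ∣ β₁ * a + β₂ * b → ℓ ≤ |a| ∨ ℓ ≤ |b|)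
    (G : Finset (ℤ × ℤ)) (hG : ∀ P ∈ G, |P.1| ≤ K ∧ |P.2| ≤ K)
    (hGq : ∀ P ∈ G, (q : ℤ) ∣ β₁ * P.1 + β₂ * P.2) :
    (#G : ℝ) ≤ (2 * K / ℓ + 1) * (4 * ℓ * K / q + 1) := by
  have hsub : ∀ P ∈ G, ∀ Q ∈ G, (q : ℤ) ∣ β₁ * (P.1 - Q.1) + β₂ * (P.2 - Q.2) := by
    intro P hP Q hQ
    rw [show β₁ * (P.1 - Q.1) + β₂ * (P.2 - Q.2) =
      (β₁ * P.1 + β₂ * P.2) - (β₁ * Q.1 + β₂ * Q.2) by ring]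
    exact dvd_sub (hGq P hP) (hGq Q hQ)
  have hsep : ∀ P ∈ G, ∀ Q ∈ G, P ≠ Q → ℓ ≤ |P.1 - Q.1| ∨ ℓ ≤ |P.2 - Q.2| := by
    intro P hP Q hQ hne
    refine hmin _ _ ?_ (hsub P hP Q hQ)
    by_contra hcon
    push Not at hcon
    exact hne (Prod.ext (by linarith [hcon.1]) (by linarith [hcon.2]))
  have hK' : (0 : ℝ) ≤ K := by exact_mod_cast hK
  have hℓ' : (0 : ℝ) < ℓ := by exact_mod_cast hℓ
  have hcard : #G ≤ ⌊(2 * K / ℓ + 1 : ℝ)⌋₊ * #(G.image fun P => a₀ * P.2 - b₀ * P.1) := by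
    refine card_le_mul_card_image _ _ fun w _ => Nat.le_floor ?_
    have hline : ∀ P ∈ G.filter (fun P => a₀ * P.2 - b₀ * P.1 = w),
        ∀ Q ∈ G.filter (fun P => a₀ * P.2 - b₀ * P.1 = w),
        a₀ * (P.2 - Q.2) = b₀ * (P.1 - Q.1) := by
      intro P hP Q hQ
      rw [mem_filter] at hP hQ
      linear_combination hP.2 - hQ.2
    rcases hab with hab | hab
    · refine card_line_le hℓ hK hab hb _ ?_ hline ?_
      · exact fun P hP => (hG P (mem_of_mem_filter P hP)).1
      · exact fun P hP Q hQ => hsep P (mem_of_mem_filter P hP) Q (mem_of_mem_filter Q hQ)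
    · rw [← card_image_of_injective _ Prod.swap_injective]
      refine card_line_le hℓ hK hab ha _ ?_ ?_ ?_ <;> simp only [forall_mem_image]
      · exact fun P hP => (hG P (mem_of_mem_filter P hP)).2
      · exact fun P hP Q hQ => (hline P hP Q hQ).symm
      · exact fun P hP Q hQ hne => (hsep P (mem_of_mem_filter P hP) Q (mem_of_mem_filter Q hQ)
          fun h => hne (by rw [h])).symm
  calc (#G : ℝ) ≤ (⌊(2 * K / ℓ + 1 : ℝ)⌋₊ : ℝ) * #(G.image fun P => a₀ * P.2 - b₀ * P.1) := by
        exact_mod_cast hcard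
    _ ≤ (2 * K / ℓ + 1) * (4 * ℓ * K / q + 1) := by
        gcongr
        · exact Nat.floor_le (by positivity)
        · exact card_image_det_le hq hℓ.le hK ha hb G hG fun P hP Q hQ =>
            dvd_det_of_dvd h₁ h₀ (hsub P hP Q hQ)

open Finset in
/-- Bounding the solutions with fixed `x₃` by counting the lines in the direction of a short
vector `(a₀, b₀)` that contain `(x₁ ^ 2, x₂ ^ 2)`. -/
theorem card_solutions_le_lines {q : ℕ} {β₁ β₂ β₃ a₀ b₀ ℓ m : ℤ}
    (h₁ : IsCoprime β₁ q) (h₃ : IsCoprime β₃ q) (hm : m ^ 2 < q)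
    (hm1 : 1 ≤ m) (hℓ : 0 < ℓ) (ha : |a₀| ≤ ℓ) (hb : |b₀| ≤ ℓ) (ha0 : a₀ ≠ 0)
    (h₀ : (q : ℤ) ∣ β₁ * a₀ + β₂ * b₀) {F : ℝ} (hF0 : 0 ≤ F)
    (hF : ∀ w : ℤ, w ≠ 0 → ∀ T : Finset (ℤ × ℤ),
      (∀ a ∈ T, 0 < a.1 ∧ 0 < a.2 ∧ a.1 ^ 2 ≤ q ∧ a.2 ^ 2 ≤ q ∧
        a₀ * a.2 ^ 2 - b₀ * a.1 ^ 2 = w) → (#T : ℝ) ≤ F)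
    (P : Finset (ℤ × ℤ × ℤ))
    (hP : ∀ x ∈ P, (0 < x.1 ∧ x.1 ≤ m) ∧ (0 < x.2.1 ∧ x.2.1 ≤ m) ∧ (0 < x.2.2 ∧ x.2.2 ≤ m))
    (hPq : ∀ x ∈ P, (q : ℤ) ∣ β₁ * x.1 ^ 2 + β₂ * x.2.1 ^ 2 + β₃ * x.2.2 ^ 2) :
    (#P : ℝ) ≤ m + m * ((4 * ℓ * m ^ 2 / q + 1) * F) := by
  have hq : 0 < q := by
    have : (0 : ℤ) < q := by nlinarith
    exact_mod_cast this
  have hm' : (0 : ℝ) ≤ m := by exact_mod_cast (by linarith : 0 ≤ m)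
  have hℓ' : (0 : ℝ) ≤ ℓ := by exact_mod_cast hℓ.le
  have hIcc : (#(Icc 1 m) : ℝ) = m := by
    rw [Int.card_Icc, add_sub_cancel_right]
    exact_mod_cast Int.toNat_of_nonneg (by linarith : 0 ≤ m)
  have hthird : ∀ x ∈ P, ∀ y ∈ P, x.1 = y.1 → x.2.1 = y.2.1 → x = y := fun x hx y hy =>
    eq_of_fst_eq_of_snd_eq h₃ hm (hP x hx).2.2 (hP y hy).2.2 (hPq x hx) (hPq y hy)
  set w : ℤ × ℤ × ℤ → ℤ := fun x => a₀ * x.2.1 ^ 2 - b₀ * x.1 ^ 2 with hw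
  have hzero : #(P.filter fun x => w x = 0) ≤ #(Icc 1 m) := by
    refine card_le_card_of_injOn Prod.fst ?_ ?_
    · intro x hx
      have := hP x (mem_of_mem_filter x hx)
      simp only [coe_Icc, Set.mem_Icc]
      omega
    · intro x hx y hy hxy
      rw [mem_coe, mem_filter] at hx hy
      refine hthird x hx.1 y hy.1 hxy ?_
      have hxw := hx.2
      have hyw := hy.2
      simp only [hw] at hxw hyw
      rw [← hxy] at hyw
      have h1 : a₀ * (x.2.1 ^ 2 - y.2.1 ^ 2) = 0 := by linear_combination hxw - hyw
      have h2 := (mul_eq_zero.1 h1).resolve_left ha0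
      nlinarith [(hP x hx.1).2.1.1, (hP y hy.1).2.1.1]
  have hnonzero : #(P.filter fun x => w x ≠ 0) ≤
      ⌊(4 * ℓ * m ^ 2 / q + 1) * F⌋₊ * #(Icc 1 m) := by
    refine card_le_mul_card_image_of_maps_to (f := fun x => x.2.2) ?_ _ ?_
    · intro x hx
      have := hP x (mem_of_mem_filter x hx)
      simp only [mem_Icc]
      omega
    intro t _
    refine Nat.le_floor ?_
    set S := (P.filter fun x => w x ≠ 0).filter fun x => x.2.2 = t with hS
    have hSP : ∀ x ∈ S, x ∈ P ∧ w x ≠ 0 ∧ x.2.2 = t := by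
      intro x hx
      simpa [hS, and_assoc] using hx
    have hcard : #S ≤ ⌊F⌋₊ * #(S.image w) := by
      refine card_le_mul_card_image _ _ fun v hv => Nat.le_floor ?_
      have hv0 : v ≠ 0 := by
        obtain ⟨x, hx, rfl⟩ := mem_image.1 hv
        exact (hSP x hx).2.1
      have hinj : Set.InjOn (fun x : ℤ × ℤ × ℤ => (x.1, x.2.1)) (S.filter fun x => w x = v) := by
        intro x hx y hy hxy
        rw [mem_coe, mem_filter] at hx hy
        simp only [Prod.mk.injEq] at hxy
        exact hthird x (hSP x hx.1).1 y (hSP y hy.1).1 hxy.1 hxy.2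
      rw [← card_image_of_injOn hinj]
      refine hF v hv0 _ ?_
      simp only [forall_mem_image, mem_filter]
      rintro x ⟨hx, hxv⟩
      obtain ⟨h1, h2, -⟩ := hP x (hSP x hx).1
      exact ⟨h1.1, h2.1, by nlinarith, by nlinarith, hxv⟩
    have himage : (#(S.image w) : ℝ) ≤ 4 * ℓ * m ^ 2 / q + 1 := by
      have h := card_image_det_le hq hℓ.le (sq_nonneg m) ha hb
        (S.image fun x => (x.1 ^ 2, x.2.1 ^ 2)) ?_ ?_
      · rw [image_image] at h
        exact_mod_cast h
      · simp only [forall_mem_image]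
        intro x hx
        obtain ⟨h1, h2, -⟩ := hP x (hSP x hx).1
        rw [abs_of_nonneg (sq_nonneg _), abs_of_nonneg (sq_nonneg _)]
        exact ⟨by nlinarith, by nlinarith⟩
      · simp only [forall_mem_image]
        intro x hx y hy
        refine dvd_det_of_dvd h₁ h₀ ?_
        have := dvd_sub (hPq x (hSP x hx).1) (hPq y (hSP y hy).1)
        rw [(hSP x hx).2.2, (hSP y hy).2.2] at this
        obtain ⟨k, hk⟩ := this
        exact ⟨k, by linear_combination hk⟩
    calc (#S : ℝ) ≤ (⌊F⌋₊ : ℝ) * #(S.image w) := by exact_mod_cast hcard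
      _ ≤ F * (4 * ℓ * m ^ 2 / q + 1) := by
          gcongr
          exact Nat.floor_le hF0
      _ = _ := mul_comm _ _
  have hsplit := card_filter_add_card_filter_not (s := P) (fun x => w x = 0)
  calc (#P : ℝ) = #(P.filter fun x => w x = 0) + #(P.filter fun x => w x ≠ 0) := by
        exact_mod_cast hsplit.symm
    _ ≤ #(Icc 1 m) + ⌊(4 * ℓ * m ^ 2 / q + 1) * F⌋₊ * #(Icc 1 m) := by
        exact_mod_cast add_le_add hzero hnonzero
    _ ≤ m + ((4 * ℓ * m ^ 2 / q + 1) * F) * m := by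
        rw [hIcc]
        gcongr
        exact Nat.floor_le (by positivity)
    _ = _ := by ring

open Finset in
/-- The pairs of positive vectors with prescribed differences of squares are counted by divisors. -/
theorem card_sq_sub_sq_le {a b : ℤ} (ha : a ≠ 0) (hb : b ≠ 0) (T : Finset ((ℤ × ℤ) × (ℤ × ℤ)))
    (hpos : ∀ z ∈ T, 0 < z.1.1 ∧ 0 < z.1.2 ∧ 0 < z.2.1 ∧ 0 < z.2.2)
    (hT : ∀ z ∈ T, z.1.1 ^ 2 - z.2.1 ^ 2 = a ∧ z.1.2 ^ 2 - z.2.2 ^ 2 = b) :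
    #T ≤ #a.natAbs.divisors * #b.natAbs.divisors := by
  rw [← card_product]
  refine card_le_card_of_injOn
    (fun z => ((z.1.1 + z.2.1).natAbs, (z.1.2 + z.2.2).natAbs)) ?_ ?_
  · intro z hz
    simp only [coe_product, Set.mem_prod, mem_coe, Nat.mem_divisors, Int.natAbs_ne_zero,
      Int.natAbs_dvd_natAbs]
    refine ⟨⟨⟨z.1.1 - z.2.1, ?_⟩, ha⟩, ⟨z.1.2 - z.2.2, ?_⟩, hb⟩
    · linear_combination -(hT z hz).1
    · linear_combination -(hT z hz).2
  · intro z hz y hy hzy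
    simp only [Prod.mk.injEq] at hzy
    obtain ⟨z1, z2, z3, z4⟩ := hpos z hz
    obtain ⟨y1, y2, y3, y4⟩ := hpos y hy
    obtain ⟨ez1, ez2⟩ := hT z hz
    obtain ⟨ey1, ey2⟩ := hT y hy
    have s1 : z.1.1 + z.2.1 = y.1.1 + y.2.1 := by omega
    have s2 : z.1.2 + z.2.2 = y.1.2 + y.2.2 := by omega
    have d1 : z.1.1 - z.2.1 = y.1.1 - y.2.1 := by
      refine mul_left_cancel₀ (by omega : z.1.1 + z.2.1 ≠ 0) ?_
      linear_combination ez1 - ey1 - (y.1.1 - y.2.1) * s1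
    have d2 : z.1.2 - z.2.2 = y.1.2 - y.2.2 := by
      refine mul_left_cancel₀ (by omega : z.1.2 + z.2.2 ≠ 0) ?_
      linear_combination ez2 - ey2 - (y.1.2 - y.2.2) * s2
    ext <;> omega

open Finset in
/-- Cauchy–Schwarz for the fibres of a map. -/
theorem card_sq_le_card_mul_card_filter {α γ : Type*} [DecidableEq γ] {P : Finset α}
    {I : Finset γ} {f : α → γ} (hf : ∀ x ∈ P, f x ∈ I) :
    #P ^ 2 ≤ #I * #((P ×ˢ P).filter fun z => f z.1 = f z.2) := by
  have hcard : #((P ×ˢ P).filter fun z => f z.1 = f z.2) =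
      ∑ c ∈ I, #(P.filter fun x => f x = c) ^ 2 := by
    rw [card_eq_sum_card_fiberwise (f := fun z => f z.1) (t := I)
      fun z hz => hf _ (mem_product.1 (mem_filter.1 hz).1).1]
    refine sum_congr rfl fun c _ => ?_
    rw [sq, ← card_product]
    congr 1
    ext z
    simp only [mem_filter, mem_product]
    constructor
    · rintro ⟨⟨⟨ha, hb⟩, hab⟩, hc⟩
      exact ⟨⟨ha, hc⟩, hb, hab ▸ hc⟩
    · rintro ⟨⟨ha, hc⟩, hb, hd⟩
      exact ⟨⟨⟨ha, hb⟩, hc.trans hd.symm⟩, hc⟩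
  rw [hcard, card_eq_sum_card_fiberwise hf]
  exact sq_sum_le_card_mul_sum_sq

set_option maxHeartbeats 1000000 in
open Finset in
/-- Cauchy–Schwarz over `x₃`, the off-diagonal pairs being counted by the lattice points
`(x₁ ^ 2 - y₁ ^ 2, x₂ ^ 2 - y₂ ^ 2)`. -/
theorem card_solutions_sq_le {q : ℕ} {β₁ β₂ β₃ m : ℤ}
    (h₁ : IsCoprime β₁ q) (h₂ : IsCoprime β₂ q) (h₃ : IsCoprime β₃ q) (hm : m ^ 2 < q)
    (hm1 : 1 ≤ m) {t H : ℝ} (ht0 : 0 ≤ t)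
    (ht : ∀ k : ℕ, k ≠ 0 → k ≤ q → (#k.divisors : ℝ) ≤ t)
    (hH : ∀ G : Finset (ℤ × ℤ), (∀ a ∈ G, |a.1| ≤ m ^ 2 ∧ |a.2| ≤ m ^ 2) →
      (∀ a ∈ G, (q : ℤ) ∣ β₁ * a.1 + β₂ * a.2) → (#G : ℝ) ≤ H)
    (P : Finset (ℤ × ℤ × ℤ))
    (hP : ∀ x ∈ P, (0 < x.1 ∧ x.1 ≤ m) ∧ (0 < x.2.1 ∧ x.2.1 ≤ m) ∧ (0 < x.2.2 ∧ x.2.2 ≤ m))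
    (hPq : ∀ x ∈ P, (q : ℤ) ∣ β₁ * x.1 ^ 2 + β₂ * x.2.1 ^ 2 + β₃ * x.2.2 ^ 2) :
    (#P : ℝ) ^ 2 ≤ m * (#P + t ^ 2 * H) := by
  have hIcc : (#(Icc 1 m) : ℝ) = m := by
    rw [Int.card_Icc, add_sub_cancel_right]
    exact_mod_cast Int.toNat_of_nonneg (by linarith : 0 ≤ m)
  have hmaps : ∀ x ∈ P, x.2.2 ∈ Icc 1 m := by
    intro x hx
    have := hP x hx
    simp only [mem_Icc]
    omega
  have hthird : ∀ x ∈ P, ∀ y ∈ P, x.1 = y.1 → x.2.1 = y.2.1 → x = y := fun x hx y hy =>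
    eq_of_fst_eq_of_snd_eq h₃ hm (hP x hx).2.2 (hP y hy).2.2 (hPq x hx) (hPq y hy)
  set Q := (P ×ˢ P).filter fun z => z.1.2.2 = z.2.2.2 with hQ
  have hQmem : ∀ z ∈ Q, z.1 ∈ P ∧ z.2 ∈ P ∧ z.1.2.2 = z.2.2.2 := by
    intro z hz
    simpa [hQ, and_assoc] using hz
  have hcauchy : #P ^ 2 ≤ #(Icc 1 m) * #Q := card_sq_le_card_mul_card_filter hmaps
  have hdiff : ∀ z ∈ Q, (q : ℤ) ∣
      β₁ * (z.1.1 ^ 2 - z.2.1 ^ 2) + β₂ * (z.1.2.1 ^ 2 - z.2.2.1 ^ 2) := by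
    intro z hz
    obtain ⟨h1, h2, h3⟩ := hQmem z hz
    have := dvd_sub (hPq _ h1) (hPq _ h2)
    rw [h3] at this
    obtain ⟨k, hk⟩ := this
    exact ⟨k, by linear_combination hk⟩
  have hfst : ∀ z ∈ Q, z.1.1 = z.2.1 → z.1 = z.2 := by
    intro z hz h
    obtain ⟨h1, h2, h3⟩ := hQmem z hz
    refine Prod.ext h (Prod.ext ?_ h3)
    refine eq_of_dvd_mul_sq_sub_sq h₂ hm (hP _ h1).2.1.1 (hP _ h1).2.1.2 (hP _ h2).2.1.1
      (hP _ h2).2.1.2 ?_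
    simpa [h] using hdiff z hz
  have hsnd : ∀ z ∈ Q, z.1.2.1 = z.2.2.1 → z.1 = z.2 := by
    intro z hz h
    obtain ⟨h1, h2, h3⟩ := hQmem z hz
    refine Prod.ext ?_ (Prod.ext h h3)
    refine eq_of_dvd_mul_sq_sub_sq h₁ hm (hP _ h1).1.1 (hP _ h1).1.2 (hP _ h2).1.1
      (hP _ h2).1.2 ?_
    simpa [h] using hdiff z hz
  have hdiag : #(Q.filter fun z => z.1 = z.2) ≤ #P := by
    refine card_le_card_of_injOn Prod.fst ?_ ?_
    · exact fun z hz => (hQmem z (mem_of_mem_filter z hz)).1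
    · intro z hz y hy hzy
      rw [mem_coe, mem_filter] at hz hy
      exact Prod.ext hzy (by rw [← hz.2, ← hy.2, hzy])
  set φ : (ℤ × ℤ × ℤ) × (ℤ × ℤ × ℤ) → ℤ × ℤ :=
    fun z => (z.1.1 ^ 2 - z.2.1 ^ 2, z.1.2.1 ^ 2 - z.2.2.1 ^ 2) with hφ
  set O := Q.filter fun z => ¬ z.1 = z.2 with hO
  have hOmem : ∀ z ∈ O, z ∈ Q ∧ z.1 ≠ z.2 := fun z hz => by simpa [hO] using hz
  have himage : (#(O.image φ) : ℝ) ≤ H := by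
    refine hH _ ?_ ?_ <;> simp only [forall_mem_image]
    · intro z hz
      obtain ⟨h1, h2, -⟩ := hQmem z (hOmem z hz).1
      exact ⟨abs_sq_sub_sq_le (hP _ h1).1 (hP _ h2).1,
        abs_sq_sub_sq_le (hP _ h1).2.1 (hP _ h2).2.1⟩
    · exact fun z hz => hdiff z (hOmem z hz).1
  have hoff : #O ≤ ⌊t ^ 2⌋₊ * #(O.image φ) := by
    refine card_le_mul_card_image _ _ fun ab hab => Nat.le_floor ?_
    obtain ⟨z₀, hz₀, rfl⟩ := mem_image.1 hab
    have hne₁ : (φ z₀).1 ≠ 0 := by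
      intro h
      obtain ⟨h1, h2, -⟩ := hQmem z₀ (hOmem z₀ hz₀).1
      refine (hOmem z₀ hz₀).2 (hfst z₀ (hOmem z₀ hz₀).1 ?_)
      simp only [hφ] at h
      nlinarith [(hP _ h1).1.1, (hP _ h2).1.1]
    have hne₂ : (φ z₀).2 ≠ 0 := by
      intro h
      obtain ⟨h1, h2, -⟩ := hQmem z₀ (hOmem z₀ hz₀).1
      refine (hOmem z₀ hz₀).2 (hsnd z₀ (hOmem z₀ hz₀).1 ?_)
      simp only [hφ] at h
      nlinarith [(hP _ h1).2.1.1, (hP _ h2).2.1.1]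
    have hle : (φ z₀).1.natAbs ≤ q ∧ (φ z₀).2.natAbs ≤ q := by
      obtain ⟨h1, h2, -⟩ := hQmem z₀ (hOmem z₀ hz₀).1
      zify
      exact ⟨(abs_sq_sub_sq_le (hP _ h1).1 (hP _ h2).1).trans hm.le,
        (abs_sq_sub_sq_le (hP _ h1).2.1 (hP _ h2).2.1).trans hm.le⟩
    have hinj : Set.InjOn (fun z : (ℤ × ℤ × ℤ) × (ℤ × ℤ × ℤ) =>
        ((z.1.1, z.1.2.1), (z.2.1, z.2.2.1))) (O.filter fun z => φ z = φ z₀) := by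
      intro z hz y hy hzy
      rw [mem_coe, mem_filter] at hz hy
      obtain ⟨hz1, hz2, -⟩ := hQmem z (hOmem z hz.1).1
      obtain ⟨hy1, hy2, -⟩ := hQmem y (hOmem y hy.1).1
      simp only [Prod.mk.injEq] at hzy
      exact Prod.ext (hthird _ hz1 _ hy1 hzy.1.1 hzy.1.2) (hthird _ hz2 _ hy2 hzy.2.1 hzy.2.2)
    have hcard : #(O.filter fun z => φ z = φ z₀) ≤
        #(φ z₀).1.natAbs.divisors * #(φ z₀).2.natAbs.divisors := by
      rw [← card_image_of_injOn hinj]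
      refine card_sq_sub_sq_le hne₁ hne₂ _ ?_ ?_ <;> simp only [forall_mem_image, mem_filter]
      · rintro z ⟨hz, -⟩
        obtain ⟨hz1, hz2, -⟩ := hQmem z (hOmem z hz).1
        exact ⟨(hP _ hz1).1.1, (hP _ hz1).2.1.1, (hP _ hz2).1.1, (hP _ hz2).2.1.1⟩
      · rintro z ⟨-, hz⟩
        exact ⟨congrArg Prod.fst hz, congrArg Prod.snd hz⟩
    calc (#(O.filter fun z => φ z = φ z₀) : ℝ)
        ≤ #(φ z₀).1.natAbs.divisors * #(φ z₀).2.natAbs.divisors := by exact_mod_cast hcard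
      _ ≤ t * t := mul_le_mul (ht _ (Int.natAbs_ne_zero.2 hne₁) hle.1)
          (ht _ (Int.natAbs_ne_zero.2 hne₂) hle.2) (Nat.cast_nonneg _) ht0
      _ = t ^ 2 := (sq t).symm
  have hsplit := card_filter_add_card_filter_not (s := Q) (fun z => z.1 = z.2)
  have hQle : (#Q : ℝ) ≤ #P + t ^ 2 * H := by
    calc (#Q : ℝ) = #(Q.filter fun z => z.1 = z.2) + #O := by exact_mod_cast hsplit.symm
      _ ≤ #P + ⌊t ^ 2⌋₊ * #(O.image φ) := by exact_mod_cast add_le_add hdiag hoff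
      _ ≤ #P + t ^ 2 * H := by
          gcongr
          exact Nat.floor_le (by positivity)
  calc (#P : ℝ) ^ 2 ≤ #(Icc 1 m) * #Q := by exact_mod_cast hcauchy
    _ ≤ m * (#P + t ^ 2 * H) := by
        rw [hIcc]
        have : (0 : ℝ) ≤ m := by exact_mod_cast (by linarith : 0 ≤ m)
        gcongr

open Finset in
/-- The number of positive solutions, bounded in two ways in terms of the length `ℓ` of a shortest
vector of the lattice `β₁ * a + β₂ * b ≡ 0 (mod q)`. -/
theorem exists_card_solutions_le (δ : ℝ) (hδ : 0 < δ) :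
    ∃ C : ℝ, 1 ≤ C ∧ ∀ (q : ℕ), 2 ≤ q → ∀ β₁ β₂ β₃ m : ℤ, IsCoprime β₁ q → IsCoprime β₂ q →
      IsCoprime β₃ q → 1 ≤ m → m ^ 2 < q → ∀ P : Finset (ℤ × ℤ × ℤ),
      (∀ x ∈ P, (0 < x.1 ∧ x.1 ≤ m) ∧ (0 < x.2.1 ∧ x.2.1 ≤ m) ∧ (0 < x.2.2 ∧ x.2.2 ≤ m)) →
      (∀ x ∈ P, (q : ℤ) ∣ β₁ * x.1 ^ 2 + β₂ * x.2.1 ^ 2 + β₃ * x.2.2 ^ 2) →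
      ∃ ℓ : ℝ, 0 < ℓ ∧ (#P : ℝ) ≤ C * (q : ℝ) ^ δ * (m + m ^ 3 * ℓ / q) ∧
        (#P : ℝ) ^ 2 ≤ m * #P + C * (q : ℝ) ^ δ * (m + m ^ 3 / ℓ + m ^ 5 / q) := by
  obtain ⟨C₁, hC₁, hbin⟩ := exists_card_binary_le δ hδ
  obtain ⟨C₂, hC₂, hdiv⟩ := exists_card_divisors_le (δ / 2) (half_pos hδ)
  refine ⟨4 * C₁ + 8 * C₂ ^ 2, by nlinarith, ?_⟩
  intro q hq β₁ β₂ β₃ m h₁ h₂ h₃ hm1 hm P hP hPq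
  obtain ⟨a₀, b₀, ℓ, hℓ, hℓq, ha, hb, hab, h₀, hmin⟩ := exists_shortest_vector hq h₁ (β₂ := β₂)
  have hℓlt : ℓ < q := by
    have : (2 : ℤ) ≤ q := by exact_mod_cast hq
    nlinarith
  have hne : ∀ {β a : ℤ}, IsCoprime β q → |a| = ℓ → ¬ (q : ℤ) ∣ β * a := by
    intro β a hβ ha' hdvd
    have h := Int.le_of_dvd (by rwa [ha']) ((dvd_abs _ _).2 (hβ.symm.dvd_of_dvd_mul_left hdvd))
    omega
  have ha0 : a₀ ≠ 0 := by
    rintro rfl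
    have hb' : |b₀| = ℓ := hab.resolve_left (by rw [abs_zero]; exact hℓ.ne)
    exact hne h₂ hb' (by simpa using h₀)
  have hb0 : b₀ ≠ 0 := by
    rintro rfl
    have ha' : |a₀| = ℓ := hab.resolve_right (by rw [abs_zero]; exact hℓ.ne)
    exact hne h₁ ha' (by simpa using h₀)
  have hq' : (2 : ℝ) ≤ q := by exact_mod_cast hq
  have hq0 : (0 : ℝ) < q := by linarith
  have hE : (1 : ℝ) ≤ (q : ℝ) ^ δ := Real.one_le_rpow (by linarith) hδ.le
  set E := (q : ℝ) ^ δ with hE_def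
  have hℓ' : (0 : ℝ) < ℓ := by exact_mod_cast hℓ
  have hℓq' : (ℓ : ℝ) ^ 2 ≤ q := by exact_mod_cast hℓq
  have hm' : (1 : ℝ) ≤ m := by exact_mod_cast hm1
  have hm0 : (0 : ℝ) < m := by linarith
  refine ⟨ℓ, hℓ', ?_, ?_⟩
  · have ha2 : a₀ ^ 2 ≤ q := (sq_le_sq' (abs_le.1 ha).1 (abs_le.1 ha).2).trans hℓq
    have hb2 : b₀ ^ 2 ≤ q := (sq_le_sq' (abs_le.1 hb).1 (abs_le.1 hb).2).trans hℓq
    have h := card_solutions_le_lines h₁ h₃ hm hm1 hℓ ha hb ha0 h₀ (F := C₁ * E) (by positivity)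
      (fun w hw => hbin q hq a₀ b₀ w ha0 hb0 hw ha2 hb2) P hP hPq
    have hCE : 1 ≤ C₁ * E := one_le_mul_of_one_le_of_one_le hC₁ hE
    have hr : (0 : ℝ) ≤ m ^ 3 * ℓ / q := by positivity
    calc (#P : ℝ) ≤ m + m * ((4 * ℓ * m ^ 2 / q + 1) * (C₁ * E)) := h
      _ = m * 1 + (C₁ * E) * m + 4 * (C₁ * E) * (m ^ 3 * ℓ / q) := by ring
      _ ≤ m * (C₁ * E) + (C₁ * E) * m + 4 * (C₁ * E) * (m ^ 3 * ℓ / q) := by gcongr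
      _ ≤ 4 * (C₁ * E) * (m + m ^ 3 * ℓ / q) := by nlinarith
      _ ≤ (4 * (C₁ * E) + 8 * C₂ ^ 2 * E) * (m + m ^ 3 * ℓ / q) := by
          gcongr
          exact le_add_of_nonneg_right (by positivity)
      _ = _ := by ring
  · have h := card_solutions_sq_le h₁ h₂ h₃ hm hm1 (t := C₂ * (q : ℝ) ^ (δ / 2)) (by positivity)
      (fun k hk hkq => (hdiv k hk).trans (by gcongr))
      (fun G hG hGq => card_lattice_le (by omega) h₁ hℓ (sq_nonneg m) ha hb hab h₀ hmin G hG hGq)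
      P hP hPq
    have ht : (C₂ * (q : ℝ) ^ (δ / 2)) ^ 2 = C₂ ^ 2 * E := by
      rw [mul_pow, ← Real.rpow_natCast ((q : ℝ) ^ (δ / 2)), ← Real.rpow_mul hq0.le, hE_def]
      norm_num
    have hℓdiv : (ℓ : ℝ) / q ≤ 1 / ℓ := by
      rw [div_le_div_iff₀ hq0 hℓ']
      nlinarith
    have hH : (2 * ((m ^ 2 : ℤ) : ℝ) / ℓ + 1) * (4 * ℓ * ((m ^ 2 : ℤ) : ℝ) / q + 1) ≤
        8 * (m ^ 4 / q) + 6 * (m ^ 2 / ℓ) + 1 := by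
      push_cast
      calc (2 * (m : ℝ) ^ 2 / ℓ + 1) * (4 * ℓ * m ^ 2 / q + 1)
          = 8 * ((m : ℝ) ^ 4 / q) + 2 * (m ^ 2 / ℓ) + 4 * m ^ 2 * (ℓ / q) + 1 := by
            field_simp
            ring
        _ ≤ 8 * ((m : ℝ) ^ 4 / q) + 2 * (m ^ 2 / ℓ) + 4 * m ^ 2 * (1 / ℓ) + 1 := by gcongr
        _ = _ := by ring
    have hr₁ : (0 : ℝ) ≤ m ^ 3 / ℓ := by positivity
    have hr₂ : (0 : ℝ) ≤ m ^ 5 / q := by positivity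
    rw [ht] at h
    calc (#P : ℝ) ^ 2 ≤ m * (#P + C₂ ^ 2 * E * (8 * (m ^ 4 / q) + 6 * (m ^ 2 / ℓ) + 1)) := by
          refine h.trans ?_
          gcongr
      _ = m * #P + C₂ ^ 2 * E * (8 * (m ^ 5 / q) + 6 * (m ^ 3 / ℓ) + m) := by ring
      _ ≤ m * #P + C₂ ^ 2 * E * (8 * (m + m ^ 3 / ℓ + m ^ 5 / q)) := by
          gcongr
          linarith
      _ = m * #P + 8 * C₂ ^ 2 * E * (m + m ^ 3 / ℓ + m ^ 5 / q) := by ring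
      _ ≤ m * #P + (8 * C₂ ^ 2 * E + 4 * C₁ * E) * (m + m ^ 3 / ℓ + m ^ 5 / q) := by
          gcongr
          exact le_add_of_nonneg_right (by positivity)
      _ = _ := by ring

theorem le_two_mul_of_sq_le {N S D : ℝ} (hD : 1 ≤ D) (hS : 0 < S)
    (h : N ^ 2 ≤ S * N + D * S ^ 2) : N ≤ 2 * D * S := by
  by_contra! hN
  have hDS : S ≤ D * S := le_mul_of_one_le_left hS.le hD
  nlinarith [mul_pos (show 0 < N - S - D * S by linarith) (show 0 < N by linarith)]

/-- Optimizing over the parameter `ℓ`. -/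
theorem le_of_le_of_sq_le {M Q ℓ D N : ℝ} (hM : 1 ≤ M) (hQ : 0 < Q) (hMQ : M ^ 2 ≤ Q)
    (hD : 1 ≤ D) (hN : 0 ≤ N) (h₁ : N ≤ D * (M + M ^ 3 * ℓ / Q))
    (h₂ : N ^ 2 ≤ M * N + D * (M + M ^ 3 / ℓ + M ^ 5 / Q)) :
    N ≤ 2 * D * (M ^ ((5 : ℝ) / 2) / Q ^ ((1 : ℝ) / 2) +
      M ^ ((9 : ℝ) / 5) / Q ^ ((1 : ℝ) / 5) + M) := by
  have hM0 : 0 < M := by linarith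
  obtain ⟨u, hu, huM⟩ : ∃ u : ℝ, 0 < u ∧ u = M ^ ((1 : ℝ) / 10) := ⟨_, by positivity, rfl⟩
  obtain ⟨v, hv, hvQ⟩ : ∃ v : ℝ, 0 < v ∧ v = Q ^ ((1 : ℝ) / 10) := ⟨_, by positivity, rfl⟩
  have hpow : ∀ {x y : ℝ} (k : ℕ) (r : ℝ), 0 < x → y = x ^ ((1 : ℝ) / 10) → r = k / 10 →
      x ^ r = y ^ k := by
    rintro x y k r hx rfl rfl
    rw [← Real.rpow_natCast, ← Real.rpow_mul hx.le]
    ring_nf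
  have hMu : M = u ^ 10 := by rw [← hpow 10 1 hM0 huM (by norm_num), Real.rpow_one]
  have hQv : Q = v ^ 10 := by rw [← hpow 10 1 hQ hvQ (by norm_num), Real.rpow_one]
  rw [hpow 25 (5 / 2) hM0 huM (by norm_num), hpow 18 (9 / 5) hM0 huM (by norm_num),
    hpow 5 (1 / 2) hQ hvQ (by norm_num), hpow 2 (1 / 5) hQ hvQ (by norm_num)]
  have huv : u ^ 2 ≤ v := by
    rw [hMu, hQv, ← pow_mul] at hMQ
    refine le_of_pow_le_pow_left₀ (n := 10) (by norm_num) hv.le ?_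
    rwa [← pow_mul]
  have hu1 : 1 ≤ u := by
    rw [huM]
    exact Real.one_le_rpow hM (by norm_num)
  have ha : 0 < u ^ 25 / v ^ 5 := by positivity
  have hb : 0 < u ^ 18 / v ^ 2 := by positivity
  obtain ⟨S, hS⟩ : ∃ S, S = u ^ 25 / v ^ 5 + u ^ 18 / v ^ 2 + M := ⟨_, rfl⟩
  rw [← hS]
  have hMS : M ≤ S := by linarith
  have hS0 : 0 < S := hM0.trans_le hMS
  rcases le_total (v ^ 4 / u ^ 6) ℓ with hL | hL
  · have hb2 : M ^ 3 / ℓ ≤ (u ^ 18 / v ^ 2) ^ 2 := by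
      calc M ^ 3 / ℓ ≤ M ^ 3 / (v ^ 4 / u ^ 6) := by gcongr
        _ = _ := by
          rw [hMu]
          field_simp
    have ha2 : M ^ 5 / Q = (u ^ 25 / v ^ 5) ^ 2 := by
      rw [hMu, hQv]
      field_simp
    have hsum : M + M ^ 3 / ℓ + M ^ 5 / Q ≤ S ^ 2 := by
      rw [ha2, hS]
      nlinarith [mul_pos ha hb, mul_pos ha hM0, mul_pos hb hM0]
    refine le_two_mul_of_sq_le hD hS0 (h₂.trans ?_)
    gcongr
  · have hle : M ^ 3 * ℓ / Q ≤ u ^ 18 / v ^ 2 := by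
      calc M ^ 3 * ℓ / Q ≤ M ^ 3 * (v ^ 4 / u ^ 6) / Q := by gcongr
        _ = u ^ 18 / v ^ 2 * ((u ^ 2) ^ 3 / v ^ 4) := by
          rw [hMu, hQv]
          field_simp
        _ ≤ u ^ 18 / v ^ 2 * (v ^ 3 / v ^ 4) := by gcongr
        _ ≤ u ^ 18 / v ^ 2 * 1 := by
          gcongr
          rw [div_le_one (by positivity)]
          exact pow_le_pow_right₀ ((one_le_pow₀ hu1).trans huv) (by norm_num)
        _ = _ := mul_one _
    calc N ≤ D * (M + M ^ 3 * ℓ / Q) := h₁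
      _ ≤ D * S := by
          gcongr
          linarith
      _ ≤ 2 * D * S := by nlinarith

open Finset in
/-- Up to a factor `8` for the signs, only positive solutions need to be counted. -/
theorem exists_finset_sigmaCount_le (p : ℕ) (β₁ β₂ β₃ : ℤ) (M : ℝ) (q : ℕ) :
    ∃ P : Finset (ℤ × ℤ × ℤ), sigmaCount p β₁ β₂ β₃ M q ≤ 8 * #P ∧
      (∀ x ∈ P, (0 < x.1 ∧ x.1 ≤ ⌊M⌋) ∧ (0 < x.2.1 ∧ x.2.1 ≤ ⌊M⌋) ∧
        (0 < x.2.2 ∧ x.2.2 ≤ ⌊M⌋)) ∧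
      ∀ x ∈ P, (q : ℤ) ∣ β₁ * x.1 ^ 2 + β₂ * x.2.1 ^ 2 + β₃ * x.2.2 ^ 2 := by
  set P := ((Icc 1 ⌊M⌋) ×ˢ (Icc 1 ⌊M⌋) ×ˢ (Icc 1 ⌊M⌋)).filter fun x : ℤ × ℤ × ℤ =>
    (q : ℤ) ∣ β₁ * x.1 ^ 2 + β₂ * x.2.1 ^ 2 + β₃ * x.2.2 ^ 2 with hP
  refine ⟨P, ?_, ?_, fun x hx => (mem_filter.1 hx).2⟩
  · let U : Finset (ℤ × ℤ × ℤ) := {-1, 1} ×ˢ {-1, 1} ×ˢ {-1, 1}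
    have hU : #U = 8 := by decide
    rw [sigmaCount, ← hU, ← card_product, Nat.card_coe_set_eq, ← Set.ncard_coe_finset]
    refine (Set.ncard_le_ncard (t := (((U ×ˢ P).image fun z =>
      (z.1.1 * z.2.1, z.1.2.1 * z.2.2.1, z.1.2.2 * z.2.2.2) : Finset (ℤ × ℤ × ℤ)) :
      Set (ℤ × ℤ × ℤ))) ?_ (finite_toSet _)).trans ?_
    · rintro x ⟨h1, h2, h3, hp, hq⟩
      have hne : (x.1 ≠ 0 ∧ x.2.1 ≠ 0) ∧ x.2.2 ≠ 0 := by
        rw [← mul_ne_zero_iff, ← mul_ne_zero_iff]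
        exact fun h => hp (h ▸ dvd_zero _)
      have hsign : ∀ {a : ℤ}, a ≠ 0 → a.sign ∈ ({-1, 1} : Finset ℤ) := by
        intro a ha
        rcases ha.lt_or_gt with h | h
        · simp [Int.sign_eq_neg_one_of_neg h]
        · simp [Int.sign_eq_one_of_pos h]
      have hIcc : ∀ {a : ℤ}, a ≠ 0 → ((|a| : ℤ) : ℝ) ≤ M → |a| ∈ Icc 1 ⌊M⌋ := fun ha h =>
        mem_Icc.2 ⟨Int.one_le_abs ha, Int.le_floor.2 h⟩
      rw [mem_coe, mem_image]
      refine ⟨((x.1.sign, x.2.1.sign, x.2.2.sign), (|x.1|, |x.2.1|, |x.2.2|)), ?_, ?_⟩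
      · simp only [mem_product, U, hP, mem_filter, sq_abs]
        exact ⟨⟨hsign hne.1.1, hsign hne.1.2, hsign hne.2⟩,
          ⟨hIcc hne.1.1 h1, hIcc hne.1.2 h2, hIcc hne.2 h3⟩, hq⟩
      · simp only [Int.sign_mul_abs]
    · rw [Set.ncard_coe_finset, Set.ncard_coe_finset]
      exact card_image_le
  · intro x hx
    simp only [hP, mem_filter, mem_product, mem_Icc] at hx
    omega

/-- Uniformly in the odd prime power modulus `q = pⁿ` and the coefficients
coprime to `p`: if `1 ≤ M ≤ q^{1/2-ε}` then
`Σ_{β₁,β₂,β₃}(M,q) ≪_ε (M^{5/2}q^{-1/2} + M^{9/5}q^{-1/5} + M)·q^ε`. -/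
theorem sigma_bound_final (ε : ℝ) (hε : 0 < ε) :
    ∃ Cε : ℝ, 0 < Cε ∧
      ∀ (p : ℕ), p.Prime → Odd p → ∀ (n : ℕ), 1 ≤ n → ∀ (β₁ β₂ β₃ : ℤ),
        ¬ (p : ℤ) ∣ β₁ → ¬ (p : ℤ) ∣ β₂ → ¬ (p : ℤ) ∣ β₃ →
        ∀ M : ℝ, 1 ≤ M → M ≤ ((p : ℝ) ^ n) ^ ((1 : ℝ) / 2 - ε) →
          (sigmaCount p β₁ β₂ β₃ M (p ^ n) : ℝ) ≤
            Cε * (M ^ ((5 : ℝ) / 2) / ((p : ℝ) ^ n) ^ ((1 : ℝ) / 2) +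
              M ^ ((9 : ℝ) / 5) / ((p : ℝ) ^ n) ^ ((1 : ℝ) / 5) + M) *
              ((p : ℝ) ^ n) ^ ε := by
  obtain ⟨C, hC, hcard⟩ := exists_card_solutions_le ε hε
  refine ⟨16 * C, by linarith, ?_⟩
  intro p hp _ n hn β₁ β₂ β₃ h₁ h₂ h₃ M hM1 hM
  obtain ⟨P, hPcard, hP, hPq⟩ := exists_finset_sigmaCount_le p β₁ β₂ β₃ M (p ^ n)
  have hq : 2 ≤ p ^ n := hp.two_le.trans (Nat.le_self_pow (by omega) p)
  have hcop : ∀ {β : ℤ}, ¬ (p : ℤ) ∣ β → IsCoprime β ((p ^ n : ℕ) : ℤ) := by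
    intro β hβ
    rw [Nat.cast_pow]
    exact (((Nat.prime_iff_prime_int.1 hp).coprime_iff_not_dvd.2 hβ).symm).pow_right
  set Q : ℝ := (p : ℝ) ^ n with hQ
  have hQcast : ((p ^ n : ℕ) : ℝ) = Q := Nat.cast_pow p n
  have hQ2 : (2 : ℝ) ≤ Q := by
    rw [← hQcast]
    exact_mod_cast hq
  have hMQ : M ^ 2 < Q := by
    have hlt : M < Q ^ ((1 : ℝ) / 2) :=
      hM.trans_lt (Real.rpow_lt_rpow_of_exponent_lt (by linarith) (by linarith))
    calc M ^ 2 < (Q ^ ((1 : ℝ) / 2)) ^ 2 := by gcongr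
      _ = Q := by
        rw [← Real.sqrt_eq_rpow, Real.sq_sqrt (by linarith)]
  have hm1 : 1 ≤ ⌊M⌋ := Int.le_floor.2 (by exact_mod_cast hM1)
  have hm1' : (1 : ℝ) ≤ ⌊M⌋ := by exact_mod_cast hm1
  have hmM : (⌊M⌋ : ℝ) ≤ M := Int.floor_le M
  have hm : ⌊M⌋ ^ 2 < ((p ^ n : ℕ) : ℤ) := by
    have : (⌊M⌋ : ℝ) ^ 2 < ((p ^ n : ℕ) : ℝ) := by
      rw [hQcast]
      nlinarith
    exact_mod_cast this
  obtain ⟨ℓ, hℓ, hb₁, hb₂⟩ := hcard (p ^ n) hq β₁ β₂ β₃ ⌊M⌋ (hcop h₁) (hcop h₂) (hcop h₃) hm1 hm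
    P hP hPq
  rw [hQcast] at hb₁ hb₂
  have hE : (1 : ℝ) ≤ Q ^ ε := Real.one_le_rpow (by linarith) hε.le
  have hQ0 : 0 < Q := by linarith
  have key := le_of_le_of_sq_le (M := M) (Q := Q) (N := P.card) hM1 hQ0 hMQ.le
    (one_le_mul_of_one_le_of_one_le hC hE) (Nat.cast_nonneg _) (hb₁.trans (by gcongr))
    (hb₂.trans (by gcongr))
  calc (sigmaCount p β₁ β₂ β₃ M (p ^ n) : ℝ) ≤ 8 * P.card := by exact_mod_cast hPcard
    _ ≤ _ := by
      refine (mul_le_mul_of_nonneg_left key (by norm_num)).trans (le_of_eq ?_)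
      ring
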